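/- Let d ≥ 3 and let U be an n-element configuration in Z^d. There is a number c = c(d) > 0 such that if C = (C^1, C^2) is a clustering of U with |C^1| ≤ 3, then esc_U(x) ≥ (3 − 2·G_d(o))/G_d(o) − c·n·sep(C)^{2−d} for every x ∈ C^1. -/

import Mathlib

open MeasureTheory

namespace HATFormal

/-- Points of the lattice `ℤ^d`. -/
abbrev Pt (d : ℕ) := Fin d → ℤ

/-- The `2d` unit steps of the simple random walk on `ℤ^d`. -/
def Dir (d : ℕ) : Set (Pt d) :=
  {s | ∃ i : Fin d, s = Pi.single i 1 ∨ s = Pi.single i (-1)}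

/-- The position, after `t` steps, of the walk started at `x` with steps `s`. -/
def wpos (d : ℕ) (x : Pt d) {T : ℕ} (s : Fin T → Pt d) (t : ℕ) : Pt d :=
  x + ∑ i ∈ Finset.univ.filter (fun i : Fin T => (i : ℕ) < t), s i

/-- The probability of an event `P` of the first `T` steps of simple random walk on `ℤ^d`. -/
noncomputable def prob (d T : ℕ) (P : (Fin T → Pt d) → Prop) : ℝ :=
  (Nat.card {s : Fin T → Pt d // (∀ i, s i ∈ Dir d) ∧ P s} : ℝ) / ((2 * d : ℕ) : ℝ) ^ T

open Classical in
/-- `esc d A x = P_x(τ_A = ∞)` if `x ∈ A`, and `0` otherwise. -/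
noncomputable def esc (d : ℕ) (A : Set (Pt d)) (x : Pt d) : ℝ :=
  if x ∈ A then ⨅ T : ℕ, prob d T (fun s => ∀ t, 1 ≤ t → t ≤ T → wpos d x s t ∉ A) else 0

/-- The capacity of `A`. -/
noncomputable def capa (d : ℕ) (A : Set (Pt d)) : ℝ := ∑' x : A, esc d A (x : Pt d)

/-- The harmonic measure `H_A(x) = esc_A(x) / cap_A`. -/
noncomputable def harm (d : ℕ) (A : Set (Pt d)) (x : Pt d) : ℝ := esc d A x / capa d A

/-- `P_x(τ_W < ∞)`. -/
noncomputable def retProb (d : ℕ) (W : Set (Pt d)) (x : Pt d) : ℝ :=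
  ∑' t : ℕ, prob d t (fun s => 1 ≤ t ∧ wpos d x s t ∈ W ∧
    ∀ u, 1 ≤ u → u < t → wpos d x s u ∉ W)

/-- `P_x(τ_W < ∞ and S_{τ_W − 1} = y)`. -/
noncomputable def hitFrom (d : ℕ) (W : Set (Pt d)) (x y : Pt d) : ℝ :=
  ∑' t : ℕ, prob d t (fun s => 1 ≤ t ∧ wpos d x s t ∈ W ∧ wpos d x s (t - 1) = y ∧
    ∀ u, 1 ≤ u → u < t → wpos d x s u ∉ W)

/-- `P_x(τ_W < ∞ and S_{τ_W} ∈ T)`. -/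
noncomputable def firstHitIn (d : ℕ) (W T : Set (Pt d)) (x : Pt d) : ℝ :=
  ∑' t : ℕ, prob d t (fun s => 1 ≤ t ∧ wpos d x s t ∈ W ∧ wpos d x s t ∈ T ∧
    ∀ u, 1 ≤ u → u < t → wpos d x s u ∉ W)

/-- `P_x(S_{τ_W − 1} = y ∣ τ_W < ∞)`. -/
noncomputable def transP (d : ℕ) (W : Set (Pt d)) (x y : Pt d) : ℝ :=
  hitFrom d W x y / retProb d W x

/-- The Green's function of simple random walk on `ℤ^d`. -/
noncomputable def green (d : ℕ) (x : Pt d) : ℝ :=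
  ∑' t : ℕ, prob d t (fun s => wpos d x s t = 0)

/-- Configurations: finite subsets of `ℤ^d`. -/
abbrev Conf (d : ℕ) := Finset (Pt d)

/-- `p_U(x, y)`, the probability that HAT activates at `x` and transports to `y`. -/
noncomputable def pHAT (d : ℕ) (U : Conf d) (x y : Pt d) : ℝ :=
  harm d (↑U) x * transP d ((↑U : Set (Pt d)) \ {x}) x y

open Classical in
/-- The transition probabilities of HAT. -/
noncomputable def hatProb (d : ℕ) (U V : Conf d) : ℝ :=
  if V = U then ∑' z : Pt d, pHAT d U z z
  else ∑' x : Pt d, ∑' y : Pt d,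
    if x ∈ U ∧ x ≠ y ∧ V = insert y (U.erase x) then pHAT d U x y else 0

instance (d : ℕ) : MeasurableSpace (Conf d) := ⊤

/-- `μ` is the law of HAT started from `U`. -/
def IsHATLaw (d : ℕ) (U : Conf d) (μ : Measure (ℕ → Conf d)) : Prop :=
  IsProbabilityMeasure μ ∧
  ∀ (t : ℕ) (u : ℕ → Conf d),
    μ {ω | ∀ s ≤ t, ω s = u s} =
      (if u 0 = U then 1 else 0) *
        ∏ s ∈ Finset.range t, ENNReal.ofReal (hatProb d (u s) (u (s + 1)))

/-- A signed permutation plus translation of `ℤ^d`. -/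
def SymImage (d : ℕ) (σ : Equiv.Perm (Fin d)) (ε : Fin d → ℤ) (v : Pt d) (x : Pt d) : Pt d :=
  fun i => v i + ε i * x (σ i)

/-- `SymEq d U V` holds when `V = gU` for a symmetry `g` of `ℤ^d`. -/
def SymEq (d : ℕ) (U V : Conf d) : Prop :=
  ∃ (σ : Equiv.Perm (Fin d)) (ε : Fin d → ℤ) (v : Pt d),
    (∀ i, ε i = 1 ∨ ε i = -1) ∧ V = U.image (SymImage d σ ε v)

/-- Euclidean distance on `ℤ^d`. -/
noncomputable def dist0 (d : ℕ) (x y : Pt d) : ℝ :=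
  Real.sqrt (∑ i, ((x i : ℝ) - (y i : ℝ)) ^ 2)

/-- Euclidean distance between finite subsets of `ℤ^d`. -/
noncomputable def setDist (d : ℕ) (A B : Finset (Pt d)) : ℝ :=
  sInf {r : ℝ | ∃ x ∈ A, ∃ y ∈ B, r = dist0 d x y}

/-- Euclidean diameter of a finite subset of `ℤ^d`. -/
noncomputable def diam0 (d : ℕ) (A : Finset (Pt d)) : ℝ :=
  sSup {r : ℝ | ∃ x ∈ A, ∃ y ∈ A, r = dist0 d x y}

/-- Lattice (nearest-neighbor) adjacency in `ℤ^d`. -/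
def latAdj (d : ℕ) (x y : Pt d) : Prop := (∑ i, (x i - y i).natAbs) = 1

/-- Exterior lattice boundary of a set. -/
def bdry (d : ℕ) (A : Set (Pt d)) : Set (Pt d) := {z | z ∉ A ∧ ∃ w ∈ A, latAdj d z w}

/-- Non-isolated configurations: some exposed element has a lattice neighbor in the set. -/
def NonIso (d : ℕ) (U : Conf d) : Prop :=
  ∃ x ∈ U, 0 < esc d (↑U) x ∧ ∃ y ∈ U, latAdj d x y

/-- `C` is a clustering (ordered partition into nonempty clusters) of `U`. -/
def IsClusteringOf (d : ℕ) {k : ℕ} (C : Fin k → Finset (Pt d)) (U : Finset (Pt d)) : Prop :=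
  (∀ i, (C i).Nonempty) ∧ (∀ i j, i ≠ j → Disjoint (C i) (C j)) ∧
    Finset.univ.biUnion C = U

/-- `C^{≠ i}`, the union of the clusters other than `i`. -/
def others (d : ℕ) {k : ℕ} (C : Fin k → Finset (Pt d)) (i : Fin k) : Finset (Pt d) :=
  Finset.univ.biUnion fun j => if j = i then ∅ else C j

/-- The separation of a clustering. -/
noncomputable def sep (d : ℕ) {k : ℕ} (C : Fin k → Finset (Pt d)) : ℝ :=
  ⨅ i, setDist d (C i) (others d C i)

/-- `(a, b)` separated dimer-or-trimer (DOT) clusterings. -/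
def IsDOT (d : ℕ) {k : ℕ} (C : Fin k → Finset (Pt d)) (a b : ℝ) : Prop :=
  (∀ i, (C i).card = 2 ∨ (C i).card = 3) ∧ a ≤ sep d C ∧
    ∀ i, diam0 d (C i) ≤ b * Real.log (setDist d (C i) (others d C i))

/-- Clusterings with an unspecified number of clusters. -/
abbrev ClusteringS (d : ℕ) := Σ k : ℕ, Fin k → Finset (Pt d)

/-- `π(C)`, the union of the clusters of `C`. -/
def confOf (d : ℕ) (C : ClusteringS d) : Conf d := Finset.univ.biUnion C.2

/-- `C ∈ 𝒞(U, a, b)`. -/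
def InC (d : ℕ) (U : Conf d) (a b : ℝ) (C : ClusteringS d) : Prop :=
  IsClusteringOf d C.2 U ∧ IsDOT d C.2 a b

/-- `U ∈ 𝒰_{d,n}(a, b)`. -/
def InU (d n : ℕ) (a b : ℝ) (U : Conf d) : Prop :=
  U.card = n ∧ ∃ C : ClusteringS d, InC d U a b C

/-- `C` is a clustering of an `n`-element configuration. -/
def IsClusteringConf (d n : ℕ) (C : ClusteringS d) : Prop :=
  (∀ i, (C.2 i).Nonempty) ∧ (∀ i j, i ≠ j → Disjoint (C.2 i) (C.2 j)) ∧
    (confOf d C).card = n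

open Classical in
/-- One step of the natural clustering. -/
noncomputable def clustStep (d : ℕ) (Ut Ut1 : Conf d) (C : ClusteringS d) : ClusteringS d :=
  if Ut1 = Ut then C
  else if h : ∃ p : Pt d × Pt d × Fin C.1,
      Ut \ Ut1 = {p.1} ∧ Ut1 \ Ut = {p.2.1} ∧ p.1 ∈ C.2 p.2.2 then
    ⟨C.1, Function.update C.2 h.choose.2.2
      (insert h.choose.2.1 ((C.2 h.choose.2.2).erase h.choose.1))⟩
  else ⟨1, fun _ => Ut1⟩

/-- The natural clustering of the trajectory `ω` with initial clustering `C0`. -/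
noncomputable def natClust (d : ℕ) (ω : ℕ → Conf d) (C0 : ClusteringS d) : ℕ → ClusteringS d
  | 0 => C0
  | t + 1 => clustStep d (ω t) (ω (t + 1)) (natClust d ω C0 t)

/-- `a_s = s^{1/2 − n^{−100}} + 100 n`. -/
noncomputable def aSep (n s : ℕ) : ℝ :=
  (s : ℝ) ^ ((1 : ℝ) / 2 - (n : ℝ) ^ (-(100 : ℝ))) + 100 * n

/-- `C^{i, x, y}`: remove `x` from cluster `i` of `C` and add `y` to that cluster. -/
def updC (d : ℕ) (C : ClusteringS d) (i : Fin C.1) (x y : Pt d) : ClusteringS d :=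
  ⟨C.1, Function.update C.2 i (insert y ((C.2 i).erase x))⟩

open Classical in
/-- The transition probabilities of the lifting of HAT to clusterings. -/
noncomputable def liftProb (d : ℕ) (E0 E1 : ClusteringS d) : ℝ :=
  ∑' x : Pt d, ∑' y : Pt d,
    if ∃ i : Fin E0.1, x ∈ E0.2 i ∧ E1 = updC d E0 i x y
    then pHAT d (confOf d E0) x y else 0

/-- The capacity of a clustering: the sum of the capacities of its clusters. -/
noncomputable def capS (d : ℕ) (C : ClusteringS d) : ℝ := ∑ i, capa d (↑(C.2 i))

/-- `H_C(i, x) = esc_{C^i}(x) / cap_C`. -/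
noncomputable def harmS (d : ℕ) (C : ClusteringS d) (i : Fin C.1) (x : Pt d) : ℝ :=
  esc d (↑(C.2 i)) x / capS d C

/-- `q_C(i, x, y)`. -/
noncomputable def qIHAT (d : ℕ) (C : ClusteringS d) (i : Fin C.1) (x y : Pt d) : ℝ :=
  harmS d C i x * transP d ((↑(C.2 i) : Set (Pt d)) \ {x}) x y

open Classical in
/-- The transition probabilities of intracluster HAT (IHAT). -/
noncomputable def ihatProb (d : ℕ) (D E : ClusteringS d) : ℝ :=
  ∑' x : Pt d, ∑' y : Pt d, ∑ i : Fin D.1,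
    if x ∈ D.2 i ∧ E = updC d D i x y then qIHAT d D i x y else 0

instance (d : ℕ) : MeasurableSpace (ClusteringS d) := ⊤

open Classical in
/-- `μ` is the law of the lifted HAT chain started from `E0`. -/
def IsLiftLaw (d : ℕ) (E0 : ClusteringS d) (μ : Measure (ℕ → ClusteringS d)) : Prop :=
  IsProbabilityMeasure μ ∧
  ∀ (t : ℕ) (u : ℕ → ClusteringS d),
    μ {ω | ∀ s ≤ t, ω s = u s} =
      (if u 0 = E0 then 1 else 0) *
        ∏ s ∈ Finset.range t, ENNReal.ofReal (liftProb d (u s) (u (s + 1)))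

open Classical in
/-- `μ` is the law of intracluster HAT started from `D0`. -/
def IsIHATLaw (d : ℕ) (D0 : ClusteringS d) (μ : Measure (ℕ → ClusteringS d)) : Prop :=
  IsProbabilityMeasure μ ∧
  ∀ (t : ℕ) (u : ℕ → ClusteringS d),
    μ {ω | ∀ s ≤ t, ω s = u s} =
      (if u 0 = D0 then 1 else 0) *
        ∏ s ∈ Finset.range t, ENNReal.ofReal (ihatProb d (u s) (u (s + 1)))

/-- `Pairs(E0, E1)`. -/
def Pairs (d : ℕ) (E0 E1 : ClusteringS d) : Set (Pt d × Pt d) :=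
  {p | 0 < pHAT d (confOf d E0) p.1 p.2 ∧
    ∃ i : Fin E0.1, p.1 ∈ E0.2 i ∧ E1 = updC d E0 i p.1 p.2}

/-- `Triples(E0, E1)`. -/
def Triples (d : ℕ) (E0 E1 : ClusteringS d) : Set (Fin E0.1 × Pt d × Pt d) :=
  {q | 0 < qIHAT d E0 q.1 q.2.1 q.2.2 ∧ E1 = updC d E0 q.1 q.2.1 q.2.2}

/-- The first standard basis vector of `ℤ^d`. -/
def e1v (d : ℕ) : Pt d := fun i => if (i : ℕ) = 0 then 1 else 0

/-- Reference dimers and trimers. -/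
def Ref (d : ℕ) : Set (Finset (Pt d)) :=
  {A | ∃ x : Pt d, A = {x, x + e1v d} ∨ A = {x, x + e1v d, x + e1v d + e1v d}}

/-- *-adjacency in `ℤ^d`: distinct points differing by at most one in each coordinate. -/
def starAdj (d : ℕ) (x y : Pt d) : Prop := x ≠ y ∧ ∀ i, (x i - y i).natAbs ≤ 1

/-- The *-visible boundary of `A`. -/
def visBdry (d : ℕ) (A : Finset (Pt d)) : Set (Pt d) :=
  {x | (∃ y ∈ A, starAdj d x y) ∧
    ∃ γ : ℕ → Pt d, γ 0 = x ∧ (∀ t, latAdj d (γ t) (γ (t + 1))) ∧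
      (∀ t, γ t ∉ A) ∧ ∀ r : ℝ, ∃ t, r < dist0 d (γ t) 0}

/-- `A` is connected in the nearest-neighbor graph of `ℤ^d`. -/
def LatConnected (d : ℕ) (A : Finset (Pt d)) : Prop :=
  ∀ x ∈ A, ∀ y ∈ A, ∃ (L : ℕ) (γ : ℕ → Pt d), γ 0 = x ∧ γ L = y ∧
    (∀ t < L, latAdj d (γ t) (γ (t + 1))) ∧ ∀ t ≤ L, γ t ∈ A

/-- Strict lexicographic order on `ℤ^d`. -/
def lexLt (d : ℕ) (x y : Pt d) : Prop :=
  ∃ i : Fin d, (∀ j, j < i → x j = y j) ∧ x i < y i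

/-- `x` is the lex (least) element of `A`. -/
def IsLex (d : ℕ) (A : Finset (Pt d)) (x : Pt d) : Prop :=
  x ∈ A ∧ ∀ y ∈ A, y ≠ x → lexLt d x y

/-- Third-order Taylor upper bound for `(1+s)^(-m)` near `0`. -/
theorem taylor_rpow (m : ℝ) :
    ∃ K δ : ℝ, 0 ≤ K ∧ 0 < δ ∧ δ ≤ 1 / 2 ∧ ∀ s : ℝ, |s| ≤ δ →
      (1 + s) ^ (-m) ≤ 1 - m * s + m * (m + 1) / 2 * s ^ 2
        - m * (m + 1) * (m + 2) / 6 * s ^ 3 + K * s ^ 4 := by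
  have h := (Real.one_add_rpow_hasFPowerSeriesAt_zero (a := -m)).isBigO_sub_partialSum_pow 4
  obtain ⟨K, hK, hb⟩ := h.exists_nonneg
  rw [Asymptotics.isBigOWith_iff] at hb
  obtain ⟨δ, hδ, hb⟩ := Metric.eventually_nhds_iff.1 hb
  refine ⟨K, min (δ / 2) (1 / 2), hK, by positivity, min_le_right _ _, fun s hs => ?_⟩
  have h1 : dist s 0 < δ := by
    rw [Real.dist_eq, sub_zero]
    have := hs.trans (min_le_left _ _)
    linarith
  have h2 := hb h1
  have e2 : Ring.choose (-m) 2 = m * (m + 1) / 2 := by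
    rw [Ring.choose_eq_smul]
    simp only [descPochhammer_succ_right, descPochhammer_zero, Polynomial.smeval_mul,
      Polynomial.smeval_sub, Polynomial.smeval_X, Polynomial.smeval_natCast,
      Polynomial.smeval_one]
    simp [Nat.factorial]
    ring
  have e3 : Ring.choose (-m) 3 = - (m * (m + 1) * (m + 2) / 6) := by
    rw [Ring.choose_eq_smul]
    simp only [descPochhammer_succ_right, descPochhammer_zero, Polynomial.smeval_mul,
      Polynomial.smeval_sub, Polynomial.smeval_X, Polynomial.smeval_natCast,
      Polynomial.smeval_one]
    simp [Nat.factorial]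
    ring
  have h3 : (binomialSeries ℝ (-m)).partialSum 4 s = 1 - m * s + m * (m + 1) / 2 * s ^ 2
        - m * (m + 1) * (m + 2) / 6 * s ^ 3 := by
    simp only [FormalMultilinearSeries.partialSum, Finset.sum_range_succ, Finset.sum_range_zero,
      binomialSeries_apply, e2, e3, Ring.choose_zero_right, Ring.choose_one_right]
    simp [List.ofFn_succ]
    ring
  simp only [zero_add, h3, Real.norm_eq_abs] at h2
  have h4 := (abs_le.1 h2).2
  have h5 : |(|s|) ^ 4| = s ^ 4 := by
    rw [abs_of_nonneg (by positivity)]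
    exact (by decide : Even 4).pow_abs s
  rw [h5] at h4
  linarith

theorem pair_bound (m K δ u v : ℝ) (hm : 0 < m) (hK : 0 ≤ K) (hδ : 0 < δ)
    (hT : ∀ s : ℝ, |s| ≤ δ →
      (1 + s) ^ (-m) ≤ 1 - m * s + m * (m + 1) / 2 * s ^ 2
        - m * (m + 1) * (m + 2) / 6 * s ^ 3 + K * s ^ 4)
    (hu : 0 < u) (hu1 : u ≤ 1) (hv : v ^ 2 ≤ 4 * u) (hud : 10 * u ≤ δ ^ 2) :
    (1 + (u + v)) ^ (-m) + (1 + (u - v)) ^ (-m) ≤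
      2 - 2 * m * u + m * (m + 1) * (u ^ 2 + v ^ 2) + 82 * K * u ^ 2 := by
  have a1 : |u + v| ≤ δ := by
    apply abs_le_of_sq_le_sq _ hδ.le
    nlinarith [sq_nonneg (u - v)]
  have a2 : |u - v| ≤ δ := by
    apply abs_le_of_sq_le_sq _ hδ.le
    nlinarith [sq_nonneg (u + v)]
  have b1 := hT _ a1
  have b2 := hT _ a2
  have c3 : 0 ≤ m * (m + 1) * (m + 2) / 6 * ((u + v) ^ 3 + (u - v) ^ 3) := by
    have : (u + v) ^ 3 + (u - v) ^ 3 = 2 * u ^ 3 + 6 * u * v ^ 2 := by ring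
    rw [this]; positivity
  have c4 : (u + v) ^ 4 + (u - v) ^ 4 ≤ 82 * u ^ 2 := by
    have e : (u + v) ^ 4 + (u - v) ^ 4 = 2 * (u ^ 2) * u ^ 2 + 12 * u ^ 2 * v ^ 2
      + 2 * (v ^ 2) ^ 2 := by ring
    rw [e]
    have d1 : u ^ 2 ≤ 1 := by nlinarith
    have d2 : (v ^ 2) ^ 2 ≤ (4 * u) ^ 2 := by gcongr
    have d3 : v ^ 2 ≤ 4 := by linarith
    nlinarith [mul_le_mul_of_nonneg_left d1 (sq_nonneg u),
      mul_le_mul_of_nonneg_left d3 (sq_nonneg u)]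
  have c5 := mul_le_mul_of_nonneg_left c4 hK
  nlinarith

/-- Squared Euclidean norm. -/
def nsq (d : ℕ) (x : Pt d) : ℝ := ∑ i, (x i : ℝ) ^ 2

theorem nsq_nonneg (d : ℕ) (x : Pt d) : 0 ≤ nsq d x :=
  Finset.sum_nonneg fun i _ => sq_nonneg _

theorem nsq_add_single (d : ℕ) (x : Pt d) (i : Fin d) (e : ℤ) :
    nsq d (x + Pi.single i e) = nsq d x + (2 * e * x i + e ^ 2) := by
  unfold nsq
  rw [← sub_eq_iff_eq_add', ← Finset.sum_sub_distrib, Finset.sum_eq_single i]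
  · simp; ring
  · intro j _ hj
    simp [hj]
  · simp

/-- One-step average of the simple random walk. -/
noncomputable def avg (d : ℕ) (f : Pt d → ℝ) (x : Pt d) : ℝ :=
  (∑ i : Fin d, (f (x + Pi.single i 1) + f (x + Pi.single i (-1)))) / (2 * d)

/-- A positive strictly superharmonic function comparable to `|x|^{2-d}`. -/
theorem exists_superharmonic (d : ℕ) (hd : 3 ≤ d) :
    ∃ a : ℝ, 1 ≤ a ∧ ∀ x : Pt d,
      avg d (fun z => (nsq d z + a) ^ (-(((d : ℝ) - 2) / 2))) x
        < (nsq d x + a) ^ (-(((d : ℝ) - 2) / 2)) := by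
  have hd' : (3 : ℝ) ≤ d := by exact_mod_cast hd
  set m : ℝ := ((d : ℝ) - 2) / 2 with hm
  have hm0 : 0 < m := by rw [hm]; linarith
  have hdm : (d : ℝ) = 2 * (m + 1) := by rw [hm]; ring
  obtain ⟨K, δ, hK, hδ, hδ2, hT⟩ := taylor_rpow m
  have hmm : 0 < m * (m + 1) := by positivity
  refine ⟨1 + 10 / δ ^ 2 + (d + 82 * K * d / (m * (m + 1))), ?_, fun x => ?_⟩
  · have : 0 ≤ 10 / δ ^ 2 + (d + 82 * K * d / (m * (m + 1))) := by positivity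
    linarith
  set a := 1 + 10 / δ ^ 2 + (d + 82 * K * d / (m * (m + 1))) with ha
  have ha1 : 1 ≤ a := by
    have : 0 ≤ 10 / δ ^ 2 + (d + 82 * K * d / (m * (m + 1))) := by positivity
    linarith
  have haδ : 10 / δ ^ 2 ≤ a := by
    have : 0 ≤ (d + 82 * K * d / (m * (m + 1))) := by positivity
    linarith
  have haK : d + 82 * K * d / (m * (m + 1)) < 4 * a := by
    have : 0 ≤ 10 / δ ^ 2 := by positivity
    linarith
  have haK' : m * (m + 1) * d + 82 * K * d < m * (m + 1) * (4 * a) := by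
    have := mul_lt_mul_of_pos_left haK hmm
    rw [mul_add, mul_div_cancel₀ _ hmm.ne'] at this
    exact this
  clear_value a
  set R := nsq d x + a with hR
  have hn := nsq_nonneg d x
  have hRa : a ≤ R := by linarith
  have hR0 : 0 < R := by linarith
  set u := 1 / R with hu
  have hu0 : 0 < u := by positivity
  have huR : R * u = 1 := by rw [hu]; field_simp
  have hu1 : u ≤ 1 := by nlinarith
  have hud : 10 * u ≤ δ ^ 2 := by
    rw [div_le_iff₀ (by positivity)] at haδ
    have : 10 ≤ R * δ ^ 2 := by nlinarith [sq_nonneg δ]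
    have := mul_le_mul_of_nonneg_left this hu0.le
    nlinarith
  have key : ∀ i : Fin d,
      (nsq d (x + Pi.single i 1) + a) ^ (-m) + (nsq d (x + Pi.single i (-1)) + a) ^ (-m) ≤
      R ^ (-m) * (2 - 2 * m * u + m * (m + 1) * (u ^ 2 + 4 * u ^ 2 * (x i : ℝ) ^ 2)
        + 82 * K * u ^ 2) := by
    intro i
    set v := 2 * u * (x i : ℝ) with hv
    have hxi : (x i : ℝ) ^ 2 ≤ R := by
      have : (x i : ℝ) ^ 2 ≤ nsq d x :=
        Finset.single_le_sum (f := fun j => ((x j : ℤ) : ℝ) ^ 2)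
          (fun j _ => sq_nonneg _) (Finset.mem_univ i)
      linarith
    have hv2 : v ^ 2 ≤ 4 * u := by
      have : v ^ 2 = 4 * u * (u * (x i : ℝ) ^ 2) := by rw [hv]; ring
      rw [this]
      have : u * (x i : ℝ) ^ 2 ≤ 1 := by nlinarith
      nlinarith
    have hp := pair_bound m K δ u v hm0 hK hδ hT hu0 hu1 hv2 hud
    have a1 : |u + v| ≤ δ := by
      apply abs_le_of_sq_le_sq _ hδ.le
      nlinarith [sq_nonneg (u - v)]
    have a2 : |u - v| ≤ δ := by
      apply abs_le_of_sq_le_sq _ hδ.le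
      nlinarith [sq_nonneg (u + v)]
    have b1 : 0 ≤ 1 + (u + v) := by linarith [(abs_le.1 a1).1]
    have b2 : 0 ≤ 1 + (u - v) := by linarith [(abs_le.1 a2).1]
    have e1 : nsq d (x + Pi.single i 1) + a = R * (1 + (u + v)) := by
      rw [nsq_add_single, hv, hR]; push_cast
      rw [← hR]; linear_combination (-(1 + 2 * (x i : ℝ))) * huR
    have e2 : nsq d (x + Pi.single i (-1)) + a = R * (1 + (u - v)) := by
      rw [nsq_add_single, hv, hR]; push_cast
      rw [← hR]; linear_combination (-(1 - 2 * (x i : ℝ))) * huR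
    rw [e1, e2, Real.mul_rpow hR0.le b1, Real.mul_rpow hR0.le b2, ← mul_add]
    apply mul_le_mul_of_nonneg_left _ (by positivity)
    have : v ^ 2 = 4 * u ^ 2 * (x i : ℝ) ^ 2 := by rw [hv]; ring
    rw [this] at hp
    exact hp
  unfold avg
  rw [div_lt_iff₀ (by positivity)]
  refine (Finset.sum_le_sum fun i _ => key i).trans_lt ?_
  rw [← Finset.mul_sum]
  apply mul_lt_mul_of_pos_left _ (by positivity)
  have hs : ∑ i : Fin d, (2 - 2 * m * u + m * (m + 1) * (u ^ 2 + 4 * u ^ 2 * (x i : ℝ) ^ 2)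
        + 82 * K * u ^ 2) = d * (2 - 2 * m * u + m * (m + 1) * u ^ 2 + 82 * K * u ^ 2)
          + m * (m + 1) * (4 * u ^ 2) * nsq d x := by
    unfold nsq
    rw [Finset.mul_sum]
    have : (d : ℝ) * (2 - 2 * m * u + m * (m + 1) * u ^ 2 + 82 * K * u ^ 2) =
      ∑ i : Fin d, (2 - 2 * m * u + m * (m + 1) * u ^ 2 + 82 * K * u ^ 2) := by
      rw [Finset.sum_const, Finset.card_univ, Fintype.card_fin, nsmul_eq_mul]
    rw [this, ← Finset.sum_add_distrib]
    exact Finset.sum_congr rfl fun i _ => by ring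
  rw [hs]
  have hnx : u * nsq d x = 1 - a * u := by
    have : nsq d x = R - a := by rw [hR]; ring
    rw [this]; linear_combination huR
  have : d * (2 - 2 * m * u + m * (m + 1) * u ^ 2 + 82 * K * u ^ 2)
          + m * (m + 1) * (4 * u ^ 2) * nsq d x =
      2 * d + u ^ 2 * (m * (m + 1) * d + 82 * K * d - m * (m + 1) * (4 * a))
      + 2 * m * u * (2 * (m + 1) - d) := by
    linear_combination (m * (m + 1) * (4 * u)) * hnx
  rw [this, ← hdm]
  nlinarith [pow_pos hu0 2]

/-- The unit step indexed by a coordinate and a sign. -/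
def dirv (d : ℕ) (p : Fin d × Bool) : Pt d := Pi.single p.1 (if p.2 then 1 else -1)

theorem dirv_inj (d : ℕ) : Function.Injective (dirv d) := by
  rintro ⟨i, b⟩ ⟨j, c⟩ h
  unfold dirv at h
  have hi := congrFun h i
  by_cases hij : i = j
  · subst hij
    cases b <;> cases c <;> simp at hi ⊢ 
  · cases b <;> simp [hij] at hi

theorem dirv_mem (d : ℕ) (p : Fin d × Bool) : dirv d p ∈ Dir d := by
  obtain ⟨i, b⟩ := p
  cases b
  · exact ⟨i, Or.inr (by simp [dirv])⟩
  · exact ⟨i, Or.inl (by simp [dirv])⟩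

theorem dirv_surj (d : ℕ) (s : Pt d) (hs : s ∈ Dir d) : ∃ p, dirv d p = s := by
  obtain ⟨i, h | h⟩ := hs
  · exact ⟨(i, true), by simp [dirv, h]⟩
  · exact ⟨(i, false), by simp [dirv, h]⟩

instance finSteps (d T : ℕ) (P : (Fin T → Pt d) → Prop) :
    Finite {s : Fin T → Pt d // (∀ i, s i ∈ Dir d) ∧ P s} := by
  have hD : (Dir d).Finite := by
    refine (Set.finite_range (dirv d)).subset fun s hs => ?_
    exact dirv_surj d s hs
  have h : {s : Fin T → Pt d | ∀ i, s i ∈ Dir d}.Finite := by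
    have := Set.Finite.pi (fun _ : Fin T => hD)
    refine this.subset fun s hs i _ => hs i
  exact (h.subset (fun s hs => hs.1) : {s : Fin T → Pt d | (∀ i, s i ∈ Dir d) ∧ P s}.Finite)

theorem prob_succ (d T : ℕ) (P : (Fin (T + 1) → Pt d) → Prop) :
    prob d (T + 1) P =
      (∑ i : Fin d, (prob d T (fun s => P (Fin.cons (Pi.single i 1) s))
        + prob d T (fun s => P (Fin.cons (Pi.single i (-1)) s)))) / (2 * d) := by
  have hc : Nat.card {s : Fin (T + 1) → Pt d // (∀ i, s i ∈ Dir d) ∧ P s} =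
      ∑ p : Fin d × Bool, Nat.card {s : Fin T → Pt d // (∀ i, s i ∈ Dir d) ∧
        P (Fin.cons (dirv d p) s)} := by
    rw [← Nat.card_sigma]
    symm
    refine Nat.card_congr (Equiv.ofBijective (fun q => ⟨Fin.cons (dirv d q.1) q.2.1, ?_, q.2.2.2⟩) ⟨?_, ?_⟩)
    · intro i
      refine Fin.cases ?_ (fun j => ?_) i
      · simpa using dirv_mem d q.1
      · simpa using q.2.2.1 j
    · rintro ⟨p, s, hs⟩ ⟨q, t, ht⟩ h
      simp only [Subtype.mk.injEq] at h
      obtain ⟨h1, h2⟩ := Fin.cons_injective2 h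
      obtain rfl := dirv_inj d h1
      subst h2
      rfl
    · rintro ⟨s, hs, hP⟩
      obtain ⟨p, hp⟩ := dirv_surj d (s 0) (hs 0)
      have he : Fin.cons (dirv d p) (Fin.tail s) = s := by rw [hp, Fin.cons_self_tail]
      exact ⟨⟨p, Fin.tail s, fun i => hs i.succ, by rw [he]; exact hP⟩, Subtype.ext he⟩
  unfold prob
  rw [hc, Fintype.sum_prod_type]
  simp only [Fintype.sum_bool, dirv, if_true, ← add_div, ← Finset.sum_div, Bool.false_eq_true,
    if_false]
  push_cast
  rw [div_div, pow_succ]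

theorem prob_zero (d : ℕ) (P : (Fin 0 → Pt d) → Prop) (h : P Fin.elim0) : prob d 0 P = 1 := by
  unfold prob
  have : Nat.card {s : Fin 0 → Pt d // (∀ i, s i ∈ Dir d) ∧ P s} = 1 := by
    rw [Nat.card_eq_one_iff_unique]
    refine ⟨⟨fun a b => Subtype.ext (Subsingleton.elim _ _)⟩, ⟨⟨Fin.elim0, fun i => i.elim0, h⟩⟩⟩
  rw [this]; norm_num

theorem prob_zero_neg (d : ℕ) (P : (Fin 0 → Pt d) → Prop) (h : ¬ P Fin.elim0) : prob d 0 P = 0 := by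
  unfold prob
  have : IsEmpty {s : Fin 0 → Pt d // (∀ i, s i ∈ Dir d) ∧ P s} := by
    refine ⟨fun s => h ?_⟩
    have := s.2.2
    rwa [Subsingleton.elim (Fin.elim0) s.1]
  rw [Nat.card_of_isEmpty]; norm_num

theorem prob_nonneg (d T : ℕ) (P : (Fin T → Pt d) → Prop) : 0 ≤ prob d T P := by
  unfold prob; positivity

theorem wpos_zero (d : ℕ) (x : Pt d) {T : ℕ} (s : Fin T → Pt d) : wpos d x s 0 = x := by
  simp [wpos]

theorem wpos_cons (d : ℕ) (x e : Pt d) {T : ℕ} (s : Fin T → Pt d) (t : ℕ) :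
    wpos d x (Fin.cons e s : Fin (T + 1) → Pt d) (t + 1) = wpos d (x + e) s t := by
  unfold wpos
  rw [Finset.sum_filter, Fin.sum_univ_succ, Finset.sum_filter]
  simp [add_assoc]

/-- Transition probability to the origin. -/
noncomputable def pt (d t : ℕ) (x : Pt d) : ℝ := prob d t (fun s => wpos d x s t = 0)

theorem pt_succ (d t : ℕ) (x : Pt d) : pt d (t + 1) x = avg d (pt d t) x := by
  unfold pt avg
  rw [prob_succ]
  simp only [wpos_cons]

theorem pt_zero (d : ℕ) (x : Pt d) : pt d 0 x = if x = 0 then 1 else 0 := by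
  unfold pt
  split_ifs with h
  · exact prob_zero _ _ (by rw [wpos_zero]; exact h)
  · exact prob_zero_neg _ _ (by rw [wpos_zero]; exact h)

theorem pt_nonneg (d t : ℕ) (x : Pt d) : 0 ≤ pt d t x := prob_nonneg _ _ _

theorem avg_mono (d : ℕ) (f g : Pt d → ℝ) (h : ∀ x, f x ≤ g x) (x : Pt d) :
    avg d f x ≤ avg d g x := by
  unfold avg
  gcongr with i
  · exact h _
  · exact h _

/-- Truncated Green's function. -/
noncomputable def gT (d T : ℕ) (x : Pt d) : ℝ := ∑ t ∈ Finset.range T, pt d t x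

theorem gT_succ (d T : ℕ) (x : Pt d) :
    gT d (T + 1) x = (if x = 0 then 1 else 0) + avg d (gT d T) x := by
  unfold gT
  rw [Finset.sum_range_succ', pt_zero, add_comm]
  congr 1
  simp only [pt_succ, avg]
  rw [← Finset.sum_div, Finset.sum_comm]
  congr 1
  exact Finset.sum_congr rfl fun i _ => Finset.sum_add_distrib

theorem gT_le (d : ℕ) (f : Pt d → ℝ) (hf0 : ∀ x, 0 ≤ f x)
    (hf : ∀ x, (if x = 0 then 1 else 0) + avg d f x ≤ f x) (T : ℕ) (x : Pt d) :
    gT d T x ≤ f x := by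
  induction T generalizing x with
  | zero => simpa [gT] using hf0 x
  | succ T ih =>
    rw [gT_succ]
    exact (add_le_add le_rfl (avg_mono d _ _ ih x)).trans (hf x)

/-- Upper bound on the truncated Green's function. -/
theorem exists_gT_bound (d : ℕ) (hd : 3 ≤ d) :
    ∃ K a : ℝ, 0 < K ∧ 1 ≤ a ∧ ∀ (T : ℕ) (x : Pt d),
      gT d T x ≤ K * (nsq d x + a) ^ (-(((d : ℝ) - 2) / 2)) := by
  obtain ⟨a, ha, h⟩ := exists_superharmonic d hd
  set m : ℝ := ((d : ℝ) - 2) / 2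
  set f : Pt d → ℝ := fun z => (nsq d z + a) ^ (-m) with hf
  have hε : 0 < f 0 - avg d f 0 := sub_pos.2 (h 0)
  have hf0 : ∀ x, 0 ≤ f x := fun x => by
    have := nsq_nonneg d x
    exact Real.rpow_nonneg (by linarith) _
  refine ⟨1 / (f 0 - avg d f 0), a, by positivity, ha, fun T x => ?_⟩
  refine gT_le d (fun z => 1 / (f 0 - avg d f 0) * f z)
    (fun z => mul_nonneg (by positivity) (hf0 z)) (fun z => ?_) T x
  have e : avg d (fun z => 1 / (f 0 - avg d f 0) * f z) z
      = 1 / (f 0 - avg d f 0) * avg d f z := by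
    simp only [avg, ← mul_add, ← Finset.mul_sum, mul_div_assoc]
  rw [e]
  split_ifs with hz
  · subst hz
    have : 1 / (f 0 - avg d f 0) * (f 0 - avg d f 0) = 1 := by field_simp
    linarith
  · rw [zero_add]
    exact mul_le_mul_of_nonneg_left (h z).le (by positivity)

theorem summable_pt (d : ℕ) (hd : 3 ≤ d) (x : Pt d) : Summable fun t => pt d t x := by
  obtain ⟨K, a, hK, ha, h⟩ := exists_gT_bound d hd
  exact summable_of_sum_range_le (fun t => pt_nonneg d t x) (fun T => h T x)

theorem gT_le_green (d : ℕ) (hd : 3 ≤ d) (T : ℕ) (x : Pt d) : gT d T x ≤ green d x :=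
  (summable_pt d hd x).sum_le_tsum _ (fun t _ => pt_nonneg d t x)

theorem tendsto_gT (d : ℕ) (hd : 3 ≤ d) (x : Pt d) :
    Filter.Tendsto (fun T => gT d T x) Filter.atTop (nhds (green d x)) :=
  (summable_pt d hd x).hasSum.tendsto_sum_nat

theorem green_le_of (d : ℕ) (hd : 3 ≤ d) (x : Pt d) (b : ℝ) (h : ∀ T, gT d T x ≤ b) :
    green d x ≤ b := le_of_tendsto' (tendsto_gT d hd x) h

theorem green_nonneg (d : ℕ) (x : Pt d) : 0 ≤ green d x := tsum_nonneg fun t => pt_nonneg d t x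

theorem green_eq (d : ℕ) (hd : 3 ≤ d) (x : Pt d) :
    green d x = (if x = 0 then 1 else 0) + avg d (green d) x := by
  have h1 := (Filter.tendsto_add_atTop_iff_nat 1).2 (tendsto_gT d hd x)
  simp only [gT_succ] at h1
  refine tendsto_nhds_unique h1 (tendsto_const_nhds.add ?_)
  unfold avg
  refine Filter.Tendsto.div_const (tendsto_finsetSum _ fun i _ => ?_) _
  exact (tendsto_gT d hd _).add (tendsto_gT d hd _)

theorem one_le_green (d : ℕ) (hd : 3 ≤ d) : 1 ≤ green d 0 := by
  have := gT_le_green d hd 1 0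
  simpa [gT, pt_zero] using this

theorem pt_neg (d t : ℕ) (x : Pt d) : pt d t (-x) = pt d t x := by
  induction t generalizing x with
  | zero => simp [pt_zero]
  | succ t ih =>
    rw [pt_succ, pt_succ]
    unfold avg
    congr 1
    refine Finset.sum_congr rfl fun i _ => ?_
    rw [add_comm, ← ih (x + _), ← ih (x + _)]
    simp [Pi.single_neg, add_comm]

theorem pt_perm (d t : ℕ) (σ : Equiv.Perm (Fin d)) (x : Pt d) : pt d t (x ∘ σ) = pt d t x := by
  induction t generalizing x with
  | zero =>
    rw [pt_zero, pt_zero]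
    have : x ∘ σ = 0 ↔ x = 0 := by
      constructor
      · intro h
        funext i
        have := congrFun h (σ.symm i)
        simpa using this
      · rintro rfl; rfl
    simp only [this]
  | succ t ih =>
    rw [pt_succ, pt_succ]
    unfold avg
    congr 1
    refine Eq.trans ?_ (Equiv.sum_comp σ _)
    refine Finset.sum_congr rfl fun i _ => ?_
    rw [← ih (x + _), ← ih (x + _)]
    have : ∀ e : ℤ, (x + Pi.single (σ i) e) ∘ σ = x ∘ σ + Pi.single i e := by
      intro e
      funext j
      simp [Pi.single_apply]
    rw [this, this]

theorem green_single (d : ℕ) (i j : Fin d) (e : ℤ) :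
    green d (Pi.single i e) = green d (Pi.single j e) := by
  have : (Pi.single i e : Pt d) = (Pi.single j e : Pt d) ∘ (Equiv.swap i j) := by
    funext k
    simp only [Function.comp, Pi.single_apply]
    congr 1
    rw [eq_iff_iff, Equiv.swap_apply_eq_iff, Equiv.swap_apply_right]
  rw [this]
  exact tsum_congr fun t => pt_perm d t _ _

theorem green_neg (d : ℕ) (x : Pt d) : green d (-x) = green d x :=
  tsum_congr fun t => pt_neg d t x

theorem green_unit (d : ℕ) (hd : 3 ≤ d) (s : Pt d) (hs : s ∈ Dir d) :
    green d s = green d 0 - 1 := by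
  have hd0 : (d : ℝ) ≠ 0 := by
    have : d ≠ 0 := by omega
    exact_mod_cast this
  have hneg : ∀ i : Fin d, green d (Pi.single i (-1)) = green d (Pi.single i 1) := fun i => by
    rw [Pi.single_neg, green_neg]
  have main : ∀ i : Fin d, green d (Pi.single i 1) = green d 0 - 1 := by
    intro i
    have h := green_eq d hd 0
    have : avg d (green d) 0 = green d (Pi.single i 1) := by
      unfold avg
      simp only [zero_add, hneg]
      rw [Finset.sum_congr rfl fun j _ => by rw [green_single d j i 1]]
      simp
      field_simp
      ring
    rw [this] at h
    simp at h
    linarith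
  obtain ⟨i, rfl | rfl⟩ := hs
  · exact main i
  · rw [hneg, main]

theorem avg_le_of (d : ℕ) (hd : 3 ≤ d) (f : Pt d → ℝ) (x : Pt d) (b : ℝ)
    (h : ∀ s ∈ Dir d, f (x + s) ≤ b) : avg d f x ≤ b := by
  unfold avg
  have hd0 : (0 : ℝ) < d := by
    have : 0 < d := by omega
    exact_mod_cast this
  rw [div_le_iff₀ (by positivity)]
  calc _ ≤ ∑ i : Fin d, (b + b) := Finset.sum_le_sum fun i _ =>
        add_le_add (h _ ⟨i, Or.inl rfl⟩) (h _ ⟨i, Or.inr rfl⟩)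
    _ = b * (2 * d) := by simp; ring

theorem neg_mem_Dir (d : ℕ) (s : Pt d) (hs : s ∈ Dir d) : -s ∈ Dir d := by
  obtain ⟨i, rfl | rfl⟩ := hs
  · exact ⟨i, Or.inr (by rw [Pi.single_neg])⟩
  · exact ⟨i, Or.inl (by rw [Pi.single_neg, neg_neg])⟩

theorem green_le (d : ℕ) (hd : 3 ≤ d) (x : Pt d) (hx : x ≠ 0) : green d x ≤ green d 0 - 1 := by
  refine green_le_of d hd x _ fun T => ?_
  induction T generalizing x with
  | zero => simpa [gT] using one_le_green d hd
  | succ T ih =>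
    by_cases hxD : x ∈ Dir d
    · exact (gT_le_green d hd _ _).trans (green_unit d hd x hxD).le
    · rw [gT_succ, if_neg hx, zero_add]
      refine avg_le_of d hd _ _ _ fun s hs => ih _ fun h0 => hxD ?_
      rw [eq_neg_of_add_eq_zero_left h0]
      exact neg_mem_Dir d s hs

/-- The comparison function `Σ_{y ∈ A} G(z - y) / G(0)`. -/
noncomputable def wA (d : ℕ) (A : Finset (Pt d)) (z : Pt d) : ℝ :=
  ∑ y ∈ A, green d (z - y) / green d 0

open Classical in
theorem wA_eq (d : ℕ) (hd : 3 ≤ d) (A : Finset (Pt d)) (z : Pt d) :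
    wA d A z = (if z ∈ A then 1 / green d 0 else 0) + avg d (wA d A) z := by
  have h1 : ∀ y, green d (z - y) / green d 0 = (if z = y then 1 / green d 0 else 0) +
      avg d (fun w => green d (w - y) / green d 0) z := by
    intro y
    rw [green_eq d hd (z - y), add_div]
    congr 1
    · simp only [sub_eq_zero]; split_ifs <;> simp
    · simp only [avg, ← add_div, ← Finset.sum_div, add_sub_right_comm]
      rw [div_right_comm]
  unfold wA
  rw [Finset.sum_congr rfl fun y _ => h1 y, Finset.sum_add_distrib]
  congr 1
  · simp
  · simp only [avg]
    rw [← Finset.sum_div, Finset.sum_comm]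
    congr 1
    exact Finset.sum_congr rfl fun i _ => Finset.sum_add_distrib

/-- Avoidance at times `0..T`. -/
theorem avoid_ge (d : ℕ) (hd : 3 ≤ d) (A : Finset (Pt d)) (T : ℕ) (z : Pt d) :
    1 - wA d A z ≤ prob d T (fun s => ∀ t, t ≤ T → wpos d z s t ∉ A) := by
  have hG := one_le_green d hd
  have hd0 : (d : ℝ) ≠ 0 := by
    have : d ≠ 0 := by omega
    exact_mod_cast this
  have hw0 : ∀ z, 0 ≤ wA d A z := fun z => Finset.sum_nonneg fun y _ =>
    div_nonneg (green_nonneg _ _) (by linarith)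
  have hA : ∀ z ∈ A, 1 ≤ wA d A z := fun z hz => by
    have := Finset.single_le_sum (f := fun y => green d (z - y) / green d 0)
      (fun y _ => div_nonneg (green_nonneg d _) (by linarith)) hz
    simp only [sub_self] at this
    rwa [div_self (by linarith)] at this
  induction T generalizing z with
  | zero =>
    by_cases hz : z ∈ A
    · linarith [hA z hz, prob_nonneg d 0 (fun s => ∀ t, t ≤ 0 → wpos d z s t ∉ A)]
    · rw [prob_zero]
      · linarith [hw0 z]
      · intro t ht
        obtain rfl : t = 0 := by omega
        rwa [wpos_zero]
  | succ T ih =>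
    by_cases hz : z ∈ A
    · linarith [hA z hz, prob_nonneg d (T + 1) (fun s => ∀ t, t ≤ T + 1 → wpos d z s t ∉ A)]
    · rw [prob_succ]
      have e : ∀ v : Pt d, (fun s : Fin T → Pt d => ∀ t, t ≤ T + 1 →
          wpos d z (Fin.cons v s : Fin (T + 1) → Pt d) t ∉ A) =
          fun s => ∀ t, t ≤ T → wpos d (z + v) s t ∉ A := by
        intro v
        funext s
        refine propext ⟨fun h t ht => ?_, fun h t ht => ?_⟩
        · rw [← wpos_cons]; exact h _ (by omega)
        · cases t with
          | zero => rwa [wpos_zero]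
          | succ t => rw [wpos_cons]; exact h t (by omega)
      simp only [e]
      have h1 := avg_mono d _ _ ih z
      have h2 : avg d (fun z => 1 - wA d A z) z = 1 - avg d (wA d A) z := by
        simp only [avg]
        rw [eq_sub_iff_add_eq, ← add_div, ← Finset.sum_add_distrib, div_eq_one_iff_eq (by positivity)]
        rw [Finset.sum_congr rfl fun i _ => show _ = (2 : ℝ) by ring]
        simp; ring
      rw [h2] at h1
      have h3 := wA_eq d hd A z
      rw [if_neg hz, zero_add] at h3
      rw [h3]
      exact h1

theorem esc_ge (d : ℕ) (hd : 3 ≤ d) (A : Finset (Pt d)) (x : Pt d) (hx : x ∈ A) :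
    1 - (wA d A x - 1 / green d 0) ≤ esc d (↑A) x := by
  have hG := one_le_green d hd
  have hd0 : (d : ℝ) ≠ 0 := by
    have : d ≠ 0 := by omega
    exact_mod_cast this
  have hw := wA_eq d hd A x
  rw [if_pos hx] at hw
  have hw0 : ∀ z, 0 ≤ wA d A z := fun z => Finset.sum_nonneg fun y _ =>
    div_nonneg (green_nonneg _ _) (by linarith)
  have hav : 0 ≤ avg d (wA d A) x := by
    unfold avg
    exact div_nonneg (Finset.sum_nonneg fun i _ => add_nonneg (hw0 _) (hw0 _)) (by positivity)
  unfold esc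
  rw [if_pos (by exact_mod_cast hx)]
  refine le_ciInf fun T => ?_
  cases T with
  | zero =>
    rw [prob_zero]
    · linarith
    · intro t h1 h2; omega
  | succ T =>
    rw [prob_succ]
    have e : ∀ v : Pt d, (fun s : Fin T → Pt d => ∀ t, 1 ≤ t → t ≤ T + 1 →
        wpos d x (Fin.cons v s : Fin (T + 1) → Pt d) t ∉ (↑A : Set (Pt d))) =
        fun s => ∀ t, t ≤ T → wpos d (x + v) s t ∉ A := by
      intro v
      funext s
      refine propext ⟨fun h t ht => ?_, fun h t h1 ht => ?_⟩
      · rw [← wpos_cons]; exact_mod_cast h _ (by omega) (by omega)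
      · cases t with
        | zero => omega
        | succ t => rw [wpos_cons]; exact_mod_cast h t (by omega)
    simp only [e]
    have h1 := avg_mono d _ _ (avoid_ge d hd A T) x
    have h2 : avg d (fun z => 1 - wA d A z) x = 1 - avg d (wA d A) x := by
      simp only [avg]
      rw [eq_sub_iff_add_eq, ← add_div, ← Finset.sum_add_distrib, div_eq_one_iff_eq (by positivity)]
      rw [Finset.sum_congr rfl fun i _ => show _ = (2 : ℝ) by ring]
      simp; ring
    rw [h2] at h1
    rw [hw]
    refine le_trans (by linarith) h1

theorem nsq_sub (d : ℕ) (x y : Pt d) : nsq d (x - y) = dist0 d x y ^ 2 := by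
  unfold nsq dist0
  rw [Real.sq_sqrt (Finset.sum_nonneg fun i _ => sq_nonneg _)]
  simp

theorem dist0_pos (d : ℕ) (x y : Pt d) (h : x ≠ y) : 0 < dist0 d x y := by
  unfold dist0
  apply Real.sqrt_pos.2
  obtain ⟨i, hi⟩ := Function.ne_iff.1 h
  refine Finset.sum_pos' (fun i _ => sq_nonneg _) ⟨i, Finset.mem_univ _, ?_⟩
  have : (x i : ℝ) - y i ≠ 0 := sub_ne_zero.2 (by exact_mod_cast hi)
  positivity

theorem exists_green_bound (d : ℕ) (hd : 3 ≤ d) :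
    ∃ K : ℝ, 0 < K ∧ ∀ x y : Pt d, x ≠ y →
      green d (x - y) ≤ K * dist0 d x y ^ ((2 : ℝ) - d) := by
  obtain ⟨K, a, hK, ha, h⟩ := exists_gT_bound d hd
  have hd' : (3 : ℝ) ≤ d := by exact_mod_cast hd
  refine ⟨K, hK, fun x y hxy => green_le_of d hd _ _ fun T => (h T _).trans ?_⟩
  have hp := dist0_pos d x y hxy
  apply mul_le_mul_of_nonneg_left _ hK.le
  have e : dist0 d x y ^ ((2 : ℝ) - d) = (dist0 d x y ^ 2) ^ (-(((d : ℝ) - 2) / 2)) := by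
    rw [← Real.rpow_natCast, ← Real.rpow_mul hp.le]
    congr 1
    push_cast; ring
  rw [e, nsq_sub]
  apply Real.rpow_le_rpow_of_nonpos (by positivity) (by linarith) (by linarith)

theorem setDist_bdd (d : ℕ) (A B : Finset (Pt d)) :
    BddBelow {r : ℝ | ∃ x ∈ A, ∃ y ∈ B, r = dist0 d x y} :=
  ⟨0, by rintro r ⟨x, _, y, _, rfl⟩; exact Real.sqrt_nonneg _⟩

theorem setDist_le (d : ℕ) (A B : Finset (Pt d)) (x y : Pt d) (hx : x ∈ A) (hy : y ∈ B) :
    setDist d A B ≤ dist0 d x y := csInf_le (setDist_bdd d A B) ⟨x, hx, y, hy, rfl⟩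

theorem setDist_pos (d : ℕ) (A B : Finset (Pt d)) (hA : A.Nonempty) (hB : B.Nonempty)
    (h : Disjoint A B) : 0 < setDist d A B := by
  have hfin : {r : ℝ | ∃ x ∈ A, ∃ y ∈ B, r = dist0 d x y}.Finite := by
    refine ((A ×ˢ B).image fun p => dist0 d p.1 p.2).finite_toSet.subset ?_
    rintro r ⟨x, hx, y, hy, rfl⟩
    simp only [Finset.coe_image, Set.mem_image, Finset.mem_coe, Finset.mem_product]
    exact ⟨(x, y), ⟨hx, hy⟩, rfl⟩
  obtain ⟨x, hx⟩ := hA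
  obtain ⟨y, hy⟩ := hB
  have hne : {r : ℝ | ∃ x ∈ A, ∃ y ∈ B, r = dist0 d x y}.Nonempty := ⟨_, x, hx, y, hy, rfl⟩
  obtain ⟨x2, hx2, y2, hy2, he⟩ := hne.csInf_mem hfin
  unfold setDist
  rw [he]
  exact dist0_pos d _ _ fun e => Finset.disjoint_left.1 h hx2 (e ▸ hy2)

/-- **Escape probability lower bound.** Let `d ≥ 3`. There is `c = c(d) > 0` such that if
`C = (C¹, C²)` is a clustering of an `n`-element configuration `U ⊂ ℤ^d` with `|C¹| ≤ 3`,
then `esc_U(x) ≥ (3 − 2G_d(o))/G_d(o) − c n sep(C)^{2−d}` for every `x ∈ C¹`. -/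
theorem min_esc (d : ℕ) (hd : 3 ≤ d) :
    ∃ c : ℝ, 0 < c ∧
      ∀ (n : ℕ) (U : Conf d), U.card = n →
        ∀ C1 C2 : Finset (Pt d),
          IsClusteringOf d ![C1, C2] U → C1.card ≤ 3 →
          ∀ x ∈ C1,
            (3 - 2 * green d 0) / green d 0 -
                c * (n : ℝ) * sep d ![C1, C2] ^ ((2 : ℝ) - (d : ℝ)) ≤
              esc d (↑U) x := by
  obtain ⟨K, hK, hgreen⟩ := exists_green_bound d hd
  refine ⟨K, hK, ?_⟩
  intro n U hn C1 C2 hC hcard x hx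
  have hG := one_le_green d hd
  have hG0 : 0 < green d 0 := by linarith
  have hd' : (3 : ℝ) ≤ d := by exact_mod_cast hd
  obtain ⟨hne, hdis, hU⟩ := hC
  have hdis : Disjoint C1 C2 := hdis 0 1 (by decide)
  have hne1 : C1.Nonempty := hne 0
  have hne2 : C2.Nonempty := hne 1
  have hU : C1 ∪ C2 = U := by
    rw [← hU]
    ext z
    simp [Fin.exists_fin_two]
  have o0 : others d ![C1, C2] 0 = C2 := by
    ext z; simp [others, Fin.exists_fin_two]
  have o1 : others d ![C1, C2] 1 = C1 := by
    ext z; simp [others, Fin.exists_fin_two]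
  have hsep_le : ∀ y ∈ C2, sep d ![C1, C2] ≤ dist0 d x y := by
    intro y hy
    refine (ciInf_le (Set.finite_range _).bddBelow 0).trans ?_
    rw [o0]
    exact setDist_le d _ _ _ _ hx hy
  have hsep_pos : 0 < sep d ![C1, C2] := by
    obtain ⟨i, hi⟩ := exists_eq_ciInf_of_finite
      (f := fun i : Fin 2 => setDist d (![C1, C2] i) (others d ![C1, C2] i))
    unfold sep
    rw [← hi]
    fin_cases i
    · simp only [Fin.zero_eta, o0]
      exact setDist_pos d C1 C2 hne1 hne2 hdis
    · simp only [Fin.mk_one, o1]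
      exact setDist_pos d C2 C1 hne2 hne1 hdis.symm
  set S := sep d ![C1, C2] ^ ((2 : ℝ) - (d : ℝ)) with hS
  have hS0 : 0 ≤ S := Real.rpow_nonneg hsep_pos.le _
  have hxU : x ∈ U := by rw [← hU]; exact Finset.mem_union_left _ hx
  refine le_trans ?_ (esc_ge d hd U x hxU)
  have hsum : wA d U x = wA d C1 x + wA d C2 x := by
    unfold wA
    rw [← hU, Finset.sum_union hdis]
  have h2 : wA d C2 x ≤ K * n * S := by
    have hb : ∀ y ∈ C2, green d (x - y) / green d 0 ≤ K * S := by
      intro y hy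
      have hxy : x ≠ y := fun e => Finset.disjoint_left.1 hdis hx (e ▸ hy)
      refine (div_le_self (green_nonneg d _) hG).trans ((hgreen x y hxy).trans ?_)
      apply mul_le_mul_of_nonneg_left _ hK.le
      exact Real.rpow_le_rpow_of_nonpos hsep_pos (hsep_le y hy) (by linarith)
    have h3 : wA d C2 x ≤ C2.card • (K * S) := Finset.sum_le_card_nsmul _ _ _ hb
    have h4 : (C2.card : ℝ) ≤ n := by
      rw [← hn, ← hU]
      exact_mod_cast Finset.card_le_card Finset.subset_union_right
    rw [nsmul_eq_mul] at h3
    have := mul_le_mul_of_nonneg_right h4 (mul_nonneg hK.le hS0)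
    nlinarith
  have h1 : wA d C1 x ≤ 1 + 2 * ((green d 0 - 1) / green d 0) := by
    unfold wA
    rw [← Finset.add_sum_erase _ _ hx, sub_self, div_self hG0.ne']
    have hb : ∀ y ∈ C1.erase x, green d (x - y) / green d 0 ≤ (green d 0 - 1) / green d 0 := by
      intro y hy
      have hxy : y ≠ x := (Finset.mem_erase.1 hy).1
      gcongr
      exact green_le d hd _ (sub_ne_zero.2 hxy.symm)
    have h3 := Finset.sum_le_card_nsmul _ _ _ hb
    rw [nsmul_eq_mul, Finset.card_erase_of_mem hx] at h3
    have h4 : ((C1.card - 1 : ℕ) : ℝ) ≤ 2 := by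
      have : C1.card - 1 ≤ 2 := by omega
      exact_mod_cast this
    have h5 : 0 ≤ (green d 0 - 1) / green d 0 := div_nonneg (by linarith) hG0.le
    have := mul_le_mul_of_nonneg_right h4 h5
    linarith
  have e : (3 - 2 * green d 0) / green d 0
      = 1 - (1 + 2 * ((green d 0 - 1) / green d 0) - 1 / green d 0) := by
    field_simp
    ring
  rw [e, hsum]
  linarith

end HATFormal
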